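/- Let H and K be real Hilbert spaces, L : H → K a continuous linear map, ε > 0 and δ > 0. Let H₀ be a closed linear subspace of H, let U* ∈ H satisfy L U* = 0, and let ℰ ∈ H satisfy ‖ℰ‖_H ≤ δ. Suppose U^δ belongs to the affine set U* + ℰ + H₀ and minimizes J_ε(V) = ‖L V‖_K² + ε ‖V‖_H² over U* + ℰ + H₀. Then, with Φ = U^δ − U* − ℰ ∈ H₀, one has ‖L Φ‖_K² + ε ‖Φ‖_H² ≤ (‖L‖² + 2ε) δ² + 2ε ‖U*‖_H². (Abstract form of the key a priori estimate (4.4) in the proof of the paper's convergence theorem for the quasi-reversibility method.) -/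

import Mathlib

/-!
A minimizer `u` of a quadratic form `Q` over an affine subspace `w + S` is `Q`-orthogonal to every
`v ∈ S`: the polynomial `t ↦ Q (u + t • v) - Q u` is nonnegative and has no constant term, so its
discriminant, the square of its linear coefficient, vanishes. Hence `Q u + Q (u - w) = Q w`. When
`Q` is the Tikhonov functional and `w = U* + ℰ`, this bounds `Q (u - w)` by `Q w`, in which `L` only
sees `ℰ`.
-/

section Minimizer

variable {R M : Type*} [Field R] [LinearOrder R] [IsStrictOrderedRing R] [AddCommGroup M]
  [Module R M] {Q : QuadraticForm R M}

theorem quadraticForm_isOrtho_of_forall_le_add_smul {u v : M} (h : ∀ t : R, Q u ≤ Q (u + t • v)) :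
    Q.IsOrtho u v := by
  have expand (t : R) : Q (u + t • v) = Q v * (t * t) + QuadraticMap.polar Q u v * t + Q u := by
    rw [QuadraticMap.map_add Q, QuadraticMap.map_smul, QuadraticMap.polar_smul_right, smul_eq_mul,
      smul_eq_mul]
    ring
  have increment_nonneg (t : R) : 0 ≤ Q v * (t * t) + QuadraticMap.polar Q u v * t + 0 := by
    linarith [h t, expand t]
  have sq_polar_nonpos : QuadraticMap.polar Q u v ^ 2 ≤ 0 := by
    simpa only [discrim, mul_zero, sub_zero] using discrim_le_zero increment_nonneg
  exact QuadraticMap.isOrtho_polarBilin.mp (sq_nonpos_iff _ |>.mp sq_polar_nonpos)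

theorem quadraticForm_add_sub_eq_of_isMinOn {S : Submodule R M} {u w : M} (hu : u - w ∈ S)
    (hmin : IsMinOn Q {v | v - w ∈ S} u) : Q u + Q (u - w) = Q w := by
  have ortho : Q.IsOrtho u (w - u) := by
    refine quadraticForm_isOrtho_of_forall_le_add_smul fun t ↦ hmin ?_
    rw [Set.mem_ofPred_eq, add_sub_right_comm]
    exact S.add_mem hu (S.smul_mem t (sub_mem_comm_iff.mp hu))
  calc
    Q u + Q (u - w) = Q u + Q (w - u) := by rw [QuadraticMap.map_sub]
    _ = Q (u + (w - u)) := (QuadraticMap.isOrtho_def.mp ortho).symm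
    _ = Q w := by rw [add_sub_cancel]

end Minimizer

section Tikhonov

variable {H K : Type*} [SeminormedAddCommGroup H] [InnerProductSpace ℝ H]
  [SeminormedAddCommGroup K] [InnerProductSpace ℝ K]

/-- The Tikhonov functional `J_ε(V) = ‖L V‖² + ε ‖V‖²`, encoded as a quadratic form. -/
noncomputable def tikhonovForm (L : H →ₗ[ℝ] K) (ε : ℝ) : QuadraticForm ℝ H :=
  (LinearMap.BilinMap.toQuadraticMap (innerₗ K)).comp L +
    ε • LinearMap.BilinMap.toQuadraticMap (innerₗ H)

theorem tikhonovForm_apply (L : H →ₗ[ℝ] K) (ε : ℝ) (V : H) :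
    tikhonovForm L ε V = ‖L V‖ ^ 2 + ε * ‖V‖ ^ 2 := by
  simp [tikhonovForm]

theorem tikhonovForm_nonneg (L : H →ₗ[ℝ] K) {ε : ℝ} (hε : 0 ≤ ε) (V : H) :
    0 ≤ tikhonovForm L ε V := by
  rw [tikhonovForm_apply]
  positivity

theorem tikhonovForm_add_le_of_map_eq_zero (L : H →L[ℝ] K) {ε : ℝ} (hε : 0 ≤ ε) {x : H}
    (hx : L x = 0) (y : H) :
    tikhonovForm (L : H →ₗ[ℝ] K) ε (x + y) ≤
      (‖L‖ ^ 2 + 2 * ε) * ‖y‖ ^ 2 + 2 * ε * ‖x‖ ^ 2 := by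
  have norm_add_sq_le : ‖x + y‖ ^ 2 ≤ 2 * (‖x‖ ^ 2 + ‖y‖ ^ 2) :=
    (pow_le_pow_left₀ (norm_nonneg _) (norm_add_le x y) 2).trans add_sq_le
  calc
    tikhonovForm (L : H →ₗ[ℝ] K) ε (x + y) = ‖L y‖ ^ 2 + ε * ‖x + y‖ ^ 2 := by
      rw [tikhonovForm_apply, ContinuousLinearMap.coe_coe, map_add, hx, zero_add]
    _ ≤ (‖L‖ * ‖y‖) ^ 2 + ε * (2 * (‖x‖ ^ 2 + ‖y‖ ^ 2)) := by
      gcongr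
      exact L.le_opNorm y
    _ = (‖L‖ ^ 2 + 2 * ε) * ‖y‖ ^ 2 + 2 * ε * ‖x‖ ^ 2 := by ring

theorem stmt_12_general (L : H →L[ℝ] K) {ε δ : ℝ} (hε : 0 ≤ ε) (H₀ : Submodule ℝ H)
    {Ustar E Uδ : H} (hUstar : L Ustar = 0) (hE : ‖E‖ ≤ δ) (hUδ : Uδ - (Ustar + E) ∈ H₀)
    (hmin : ∀ V : H, V - (Ustar + E) ∈ H₀ →
      ‖L Uδ‖ ^ 2 + ε * ‖Uδ‖ ^ 2 ≤ ‖L V‖ ^ 2 + ε * ‖V‖ ^ 2) :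
    ‖L (Uδ - Ustar - E)‖ ^ 2 + ε * ‖Uδ - Ustar - E‖ ^ 2
      ≤ (‖L‖ ^ 2 + 2 * ε) * δ ^ 2 + 2 * ε * ‖Ustar‖ ^ 2 := by
  set J := tikhonovForm (L : H →ₗ[ℝ] K) ε
  have J_apply (V : H) : J V = ‖L V‖ ^ 2 + ε * ‖V‖ ^ 2 := tikhonovForm_apply _ _ _
  simp only [← J_apply] at hmin
  have pythagoras : J Uδ + J (Uδ - (Ustar + E)) = J (Ustar + E) :=
    quadraticForm_add_sub_eq_of_isMinOn hUδ (isMinOn_iff.mpr hmin)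
  calc
    ‖L (Uδ - Ustar - E)‖ ^ 2 + ε * ‖Uδ - Ustar - E‖ ^ 2 = J (Uδ - (Ustar + E)) := by
      rw [J_apply, sub_sub]
    _ ≤ J (Ustar + E) := by linarith [tikhonovForm_nonneg (L : H →ₗ[ℝ] K) hε Uδ]
    _ ≤ (‖L‖ ^ 2 + 2 * ε) * ‖E‖ ^ 2 + 2 * ε * ‖Ustar‖ ^ 2 :=
      tikhonovForm_add_le_of_map_eq_zero L hε hUstar E
    _ ≤ (‖L‖ ^ 2 + 2 * ε) * δ ^ 2 + 2 * ε * ‖Ustar‖ ^ 2 := by gcongr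

end Tikhonov

theorem stmt_12
    {H K : Type*} [NormedAddCommGroup H] [InnerProductSpace ℝ H] [CompleteSpace H]
    [NormedAddCommGroup K] [InnerProductSpace ℝ K] [CompleteSpace K]
    (L : H →L[ℝ] K) (ε δ : ℝ) (hε : 0 < ε) (hδ : 0 < δ)
    (H₀ : Submodule ℝ H) (hH₀ : IsClosed (H₀ : Set H))
    (Ustar : H) (hUstar : L Ustar = 0)
    (E : H) (hE : ‖E‖ ≤ δ)
    (Uδ : H) (hUδ : Uδ - (Ustar + E) ∈ H₀)
    (hmin : ∀ V : H, V - (Ustar + E) ∈ H₀ →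
      ‖L Uδ‖ ^ 2 + ε * ‖Uδ‖ ^ 2 ≤ ‖L V‖ ^ 2 + ε * ‖V‖ ^ 2) :
    ‖L (Uδ - Ustar - E)‖ ^ 2 + ε * ‖Uδ - Ustar - E‖ ^ 2
      ≤ (‖L‖ ^ 2 + 2 * ε) * δ ^ 2 + 2 * ε * ‖Ustar‖ ^ 2 :=
  stmt_12_general L hε.le H₀ hUstar hE hUδ hmin
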